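/- Fix an integer ℓ ≥ 1, and let w be an odd integer such that 2·w^{2^{ℓ−1}} = p₁ + p₂ for two distinct primes p₁, p₂ ≥ 5. Then the Sylow 2-subgroup of the ideal class group of ℚ(√(−p₁p₂)) is isomorphic to (ℤ/2^aℤ) × (ℤ/2^bℤ) for some integers a ≥ 1 and b ≥ ℓ. -/

import Mathlib

open NumberField

/-- `twoClassGroupIso d G` says: for any realization `K` of the imaginary quadratic field
`ℚ(√-d)` (i.e. a number field generated over `ℚ` by a square root of `-d`), every Sylow
2-subgroup of the ideal class group of its ring of integers (the 2-class group `Cl₂(-d)`)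
is isomorphic to `G`. -/
def twoClassGroupIso (d : ℕ) (G : Type) [Group G] : Prop :=
  ∀ (K : Type) [Field K] [NumberField K] (α : K),
    α ^ 2 = -(d : K) →
    IntermediateField.adjoin ℚ {α} = ⊤ →
    ∀ P : Sylow 2 (ClassGroup (NumberField.RingOfIntegers K)),
      Nonempty ((P : Subgroup (ClassGroup (NumberField.RingOfIntegers K))) ≃* G)

/-!
Put `D = -p₁p₂`. The hypotheses force `D ≡ 3 mod 4`, so the ring of integers is `ℤ√D`.

An ideal class of order dividing two has a representative whose square is generated by a rational
integer (Hilbert 90), which may be taken to be a squarefree divisor of `2D`. Hence the two-torsion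
is generated by the primes above `2` and `p₁`. It has order exactly four because a principal ideal
of norm less than `-D` is generated by a rational integer, so the Sylow two-subgroup is a product of
two nontrivial cyclic groups.

With `W = w ^ 2 ^ (ℓ - 1) = (p₁ + p₂) / 2`, the primitive element `β = (W - p₂) + √D` has norm
`W ^ 2 = w ^ 2 ^ ℓ` and is coprime to its conjugate, so `(β) = A ^ 2 ^ ℓ`. The ideal
`A ^ 2 ^ (ℓ - 1)` has norm `W < -D`, and it is not generated by an integer since `β` is primitive.
So the class of `A` has order exactly `2 ^ ℓ`.
-/

open scoped nonZeroDivisors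

section FiniteAbelianGroups

variable {p : ℕ}

theorem card_torsion_congr {G H : Type*} [Monoid G] [Monoid H] (f : G ≃* H) (n : ℕ) :
    Nat.card {x : G // x ^ n = 1} = Nat.card {x : H // x ^ n = 1} :=
  Nat.card_congr <| f.toEquiv.subtypeEquiv fun x => by
    rw [MulEquiv.toEquiv_eq_coe, MulEquiv.coe_toEquiv, ← map_pow, f.map_eq_one_iff]

theorem card_torsion_pi {ι : Type*} [Fintype ι] (G : ι → Type*) [∀ i, Monoid (G i)] (n : ℕ) :
    Nat.card {x : ∀ i, G i // x ^ n = 1} = ∏ i, Nat.card {x : G i // x ^ n = 1} := by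
  rw [← Nat.card_pi]
  exact Nat.card_congr <| (Equiv.subtypeEquivRight fun x => funext_iff).trans
    (Equiv.subtypePiEquivPi (p := fun i (y : G i) => y ^ n = 1))

theorem mem_sylow_of_pow_eq_one {G : Type*} [CommGroup G] (P : Sylow p G) {g : G} {k : ℕ}
    (hg : g ^ p ^ k = 1) : g ∈ P := by
  have hz : IsPGroup p (Subgroup.zpowers g) :=
    IsPGroup.of_card_dvd_pow (Nat.card_zpowers g ▸ orderOf_dvd_of_pow_eq_one hg)
  exact hz.le_sylow_of_normal P (Subgroup.mem_zpowers g)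

theorem card_torsion_sylow {G : Type*} [CommGroup G] (P : Sylow p G) :
    Nat.card {x : P // x ^ p = 1} = Nat.card {x : G // x ^ p = 1} :=
  Nat.card_congr
    { toFun x := ⟨x.1, congrArg Subtype.val x.2⟩
      invFun x := ⟨⟨x.1, mem_sylow_of_pow_eq_one P (k := 1) (by rw [pow_one, x.2])⟩,
        Subtype.ext x.2⟩ }

theorem pow_eq_one_of_zmod_prod {m n : ℕ} (hmn : m ∣ n)
    (x : Multiplicative (ZMod m × ZMod n)) : x ^ n = 1 := by
  have hm : (n : ZMod m) = 0 := (ZMod.natCast_eq_zero_iff n m).mpr hmn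
  refine Multiplicative.toAdd.injective (Prod.ext ?_ ?_) <;> simp [hm]

theorem card_two_torsion_eq_four {G : Type*} [CommGroup G] {a b : G} (ha : a ^ 2 = 1)
    (hb : b ^ 2 = 1) (ha1 : a ≠ 1) (hb1 : b ≠ 1) (hab1 : a * b ≠ 1)
    (h : ∀ x : G, x ^ 2 = 1 → x = 1 ∨ x = a ∨ x = b ∨ x = a * b) :
    Nat.card {x : G // x ^ 2 = 1} = 2 ^ 2 := by
  classical
  have hab : a ≠ b := fun hab => hab1 (by rw [← hab, ← sq, ha])
  have hset : {x : G | x ^ 2 = 1} = ({1, a, b, a * b} : Finset G) := by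
    ext x
    simp only [Set.mem_ofPred_eq, Finset.coe_insert, Finset.coe_singleton, Set.mem_insert_iff,
      Set.mem_singleton_iff]
    refine ⟨h x, ?_⟩
    rintro (rfl | rfl | rfl | rfl) <;> simp [mul_pow, ha, hb]
  have hcard : ({x : G | x ^ 2 = 1} : Set G).ncard = 2 ^ 2 := by
    rw [hset, Set.ncard_coe_finset]
    simp [Finset.card_insert_of_notMem, ha1.symm, hb1.symm, hab1.symm, hab, ha1, hb1]
  rwa [← Nat.card_coe_set_eq] at hcard

variable [Fact p.Prime]

theorem exists_mulEquiv_pi_zmod_prime_pow {G : Type*} [CommGroup G] [Finite G]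
    (hG : IsPGroup p G) :
    ∃ (ι : Type) (_ : Fintype ι) (e : ι → ℕ), (∀ i, 1 ≤ e i) ∧
      Nonempty (G ≃* ∀ i, Multiplicative (ZMod (p ^ e i))) := by
  obtain ⟨ι, _, n, hn, ⟨f⟩⟩ := CommGroup.equiv_prod_multiplicative_zmod_of_finite G
  have hn_pow (i : ι) : ∃ e, n i = p ^ e := by
    have : NeZero (n i) := ⟨by have := hn i; lia⟩
    have hfactor : IsPGroup p (Multiplicative (ZMod (n i))) :=
      (hG.of_equiv f).of_surjective (Pi.evalMonoidHom _ i) (Function.surjective_eval i)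
    simpa using IsPGroup.iff_card.mp hfactor
  choose e he using hn_pow
  obtain rfl : n = fun i => p ^ e i := funext he
  exact ⟨ι, inferInstance, e,
    fun i => Nat.one_le_iff_ne_zero.mpr fun h => by simpa [h] using hn i, ⟨f⟩⟩

theorem card_torsion_zmod_prime_pow {e : ℕ} (he : 1 ≤ e) :
    Nat.card {x : Multiplicative (ZMod (p ^ e)) // x ^ p = 1} = p := by
  have hp : 0 < p := (Fact.out : p.Prime).pos
  have : NeZero (p ^ e) := ⟨by positivity⟩
  have hcard : Nat.card (Multiplicative (ZMod (p ^ e))) = p ^ e := by simp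
  have hker := IsCyclic.card_powMonoidHom_ker (G := Multiplicative (ZMod (p ^ e))) p
  rwa [hcard, Nat.gcd_eq_right (dvd_pow_self p (by lia))] at hker

theorem exists_mulEquiv_zmod_prod_of_card_torsion {G : Type*} [CommGroup G] [Finite G]
    (hG : IsPGroup p G) (hcard : Nat.card {x : G // x ^ p = 1} = p ^ 2) :
    ∃ a b : ℕ, 1 ≤ a ∧ a ≤ b ∧
      Nonempty (G ≃* Multiplicative (ZMod (p ^ a) × ZMod (p ^ b))) := by
  obtain ⟨ι, _, e, he, ⟨f⟩⟩ := exists_mulEquiv_pi_zmod_prime_pow hG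
  have hι : Fintype.card ι = 2 := by
    rw [card_torsion_congr f, card_torsion_pi] at hcard
    simp only [card_torsion_zmod_prime_pow (he _), Finset.prod_const, Finset.card_univ] at hcard
    exact Nat.pow_right_injective (Fact.out : p.Prime).two_le hcard
  let σ : Fin 2 ≃ ι := (Fintype.equivFinOfCardEq hι).symm
  let toProd : (∀ i, ZMod (p ^ e i)) ≃+* ZMod (p ^ e (σ 0)) × ZMod (p ^ e (σ 1)) :=
    (RingEquiv.piCongrLeft (fun i => ZMod (p ^ e i)) σ).symm.trans (RingEquiv.piFinTwo _)
  let g := (f.trans (MulEquiv.piMultiplicative _).symm).trans toProd.toAddEquiv.toMultiplicative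
  rcases le_total (e (σ 0)) (e (σ 1)) with h | h
  · exact ⟨_, _, he _, h, ⟨g⟩⟩
  · exact ⟨_, _, he _, h, ⟨g.trans AddEquiv.prodComm.toMultiplicative⟩⟩

theorem exists_sylow_mulEquiv_zmod_prod {G : Type*} [CommGroup G] [Finite G] (P : Sylow p G)
    (hcard : Nat.card {x : G // x ^ p = 1} = p ^ 2) {g : G} {ℓ : ℕ} (hg : orderOf g = p ^ ℓ) :
    ∃ a b : ℕ, 1 ≤ a ∧ ℓ ≤ b ∧ Nonempty (P ≃* Multiplicative (ZMod (p ^ a) × ZMod (p ^ b))) := by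
  obtain ⟨a, b, ha, hab, ⟨f⟩⟩ := exists_mulEquiv_zmod_prod_of_card_torsion P.isPGroup'
    ((card_torsion_sylow P).trans hcard)
  refine ⟨a, b, ha, ?_, ⟨f⟩⟩
  let g' : P := ⟨g, mem_sylow_of_pow_eq_one P (hg ▸ pow_orderOf_eq_one g)⟩
  have hg' : g' ^ p ^ b = 1 := f.injective <| by
    rw [map_pow, map_one, pow_eq_one_of_zmod_prod (pow_dvd_pow p hab)]
  have hdvd : p ^ ℓ ∣ p ^ b := hg ▸ orderOf_dvd_of_pow_eq_one (congrArg Subtype.val hg')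
  exact (Nat.pow_dvd_pow_iff_le_right (Fact.out : p.Prime).one_lt).mp hdvd

theorem nonempty_sylow_mulEquiv_of_mulEquiv {G H : Type*} [Group G] [Group H] [Finite H]
    (e : G ≃* H) (P : Sylow p G) (Q : Sylow p H) : Nonempty (P ≃* Q) := by
  have : Finite G := Finite.of_equiv H e.symm.toEquiv
  exact ⟨(e.subgroupMap (P : Subgroup G)).trans <|
    Sylow.equiv (P.mapSurjective (f := e.toMonoidHom) e.surjective) Q⟩

end FiniteAbelianGroups

section SquareRootsOfPrincipalIdeals

theorem sq_span_pair_eq_span_singleton {R : Type*} [CommRing R] {a b t : R} (ht : t ^ 2 = a * b)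
    {x y z : R} (h : x * a + y * t + z * b = 1) :
    Ideal.span {a, t} ^ 2 = Ideal.span {a} := by
  refine le_antisymm ?_ ?_
  · rw [sq, Ideal.span_pair_mul_span_pair, Ideal.span_le]
    rintro c (rfl | rfl | rfl | rfl) <;> rw [SetLike.mem_coe, Ideal.mem_span_singleton]
    · exact dvd_mul_right a a
    · exact dvd_mul_right a t
    · exact dvd_mul_left a t
    · exact ⟨b, by rw [← sq, ht]⟩
  · have ha : a ∈ Ideal.span {a, t} := Ideal.mem_span_pair.mpr ⟨1, 0, by ring⟩
    have ht' : t ∈ Ideal.span {a, t} := Ideal.mem_span_pair.mpr ⟨0, 1, by ring⟩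
    have hsum : x * (a * a) + y * (a * t) + z * (t * t) = a := by
      linear_combination a * h + z * ht
    have hmem : x * (a * a) + y * (a * t) + z * (t * t) ∈ Ideal.span {a, t} * Ideal.span {a, t} :=
      add_mem (add_mem (Ideal.mul_mem_left _ _ (Ideal.mul_mem_mul ha ha))
        (Ideal.mul_mem_left _ _ (Ideal.mul_mem_mul ha ht')))
        (Ideal.mul_mem_left _ _ (Ideal.mul_mem_mul ht' ht'))
    rwa [hsum, ← sq, ← Ideal.span_singleton_le_iff_mem] at hmem

variable {R : Type*} [CommRing R] [IsDedekindDomain R] {a b : R} {x y : ClassGroup R}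

/-- `IsSqrtClass a x` says that the ideal class `x` contains an integral ideal whose square is the
principal ideal `(a)`. In genus theory these are the classes of products of ramified primes, with
`a` running over divisors of the discriminant. -/
def IsSqrtClass (a : R) (x : ClassGroup R) : Prop :=
  ∃ J : (Ideal R)⁰, ClassGroup.mk0 J = x ∧ (J : Ideal R) ^ 2 = Ideal.span {a}

theorem exists_isSqrtClass_of_sq_eq_span {J : Ideal R} (ha : a ≠ 0) (hJ : J ^ 2 = Ideal.span {a}) :
    ∃ x, IsSqrtClass a x := by
  have hJ0 : J ≠ 0 := by
    rintro rfl
    exact ha (Ideal.span_singleton_eq_bot.mp (by simpa using hJ.symm))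
  exact ⟨_, ⟨J, mem_nonZeroDivisors_iff_ne_zero.mpr hJ0⟩, rfl, hJ⟩

theorem mk0_pow_eq_one_iff_isPrincipal (J : (Ideal R)⁰) (n : ℕ) :
    ClassGroup.mk0 J ^ n = 1 ↔ ((J : Ideal R) ^ n).IsPrincipal := by
  rw [← map_pow]
  exact ClassGroup.mk0_eq_one_iff (pow_mem J.2 n)

theorem exists_isSqrtClass_of_sq_eq_one (hx : x ^ 2 = 1) : ∃ a, IsSqrtClass a x := by
  obtain ⟨J, rfl⟩ := ClassGroup.mk0_surjective x
  obtain ⟨a, ha⟩ := (mk0_pow_eq_one_iff_isPrincipal J 2).mp hx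
  exact ⟨a, J, rfl, ha⟩

namespace IsSqrtClass

theorem unique (hx : IsSqrtClass a x) (hy : IsSqrtClass a y) : x = y := by
  obtain ⟨I, rfl, hI⟩ := hx
  obtain ⟨J, rfl, hJ⟩ := hy
  rw [Subtype.ext ((pow_left_injective two_ne_zero) (hI.trans hJ.symm))]

theorem one : IsSqrtClass (1 : R) 1 := ⟨1, map_one _, by simp⟩

theorem mul (hx : IsSqrtClass a x) (hy : IsSqrtClass b y) : IsSqrtClass (a * b) (x * y) := by
  obtain ⟨I, rfl, hI⟩ := hx
  obtain ⟨J, rfl, hJ⟩ := hy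
  refine ⟨I * J, map_mul _ _ _, ?_⟩
  rw [Submonoid.coe_mul, mul_pow, hI, hJ, Ideal.span_singleton_mul_span_singleton]

theorem sq_eq_one (hx : IsSqrtClass a x) : x ^ 2 = 1 := by
  obtain ⟨J, rfl, hJ⟩ := hx
  exact (mk0_pow_eq_one_iff_isPrincipal J 2).mpr ⟨a, hJ⟩

theorem ne_zero (hx : IsSqrtClass a x) : a ≠ 0 := by
  obtain ⟨J, rfl, hJ⟩ := hx
  rintro rfl
  refine nonZeroDivisors.ne_zero J.2 (pow_eq_zero_iff two_ne_zero |>.mp ?_)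
  simpa using hJ

-- If `J² = (a)` then `J` divides `(s)`, and the complementary ideal has square `(b)`.
theorem of_associated_mul_sq {s : R} (hx : IsSqrtClass a x) (hs : s ≠ 0)
    (hab : Associated (a * b) (s ^ 2)) : IsSqrtClass b x := by
  have hx2 := hx.sq_eq_one
  obtain ⟨J, rfl, hJ⟩ := hx
  have hspan : Ideal.span {s} ^ 2 = (J : Ideal R) ^ 2 * Ideal.span {b} := by
    rw [hJ, Ideal.span_singleton_pow, Ideal.span_singleton_mul_span_singleton,
      Ideal.span_singleton_eq_span_singleton]
    exact hab.symm
  obtain ⟨J', hJ'⟩ : (J : Ideal R) ∣ Ideal.span {s} :=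
    (UniqueFactorizationMonoid.pow_dvd_pow_iff_dvd two_ne_zero).mp (Dvd.intro _ hspan.symm)
  have hJ0 : J' ≠ 0 := by
    rintro rfl
    simp [hs] at hJ'
  let I : (Ideal R)⁰ := ⟨J', mem_nonZeroDivisors_iff_ne_zero.mpr hJ0⟩
  have hinv : ClassGroup.mk0 J * ClassGroup.mk0 I = 1 := by
    rw [← map_mul]
    exact (ClassGroup.mk0_eq_one_iff (mul_mem J.2 I.2)).mpr ⟨s, hJ'.symm⟩
  refine ⟨I, mul_left_cancel (hinv.trans ?_), ?_⟩
  · rw [← hx2, sq]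
  · rw [hJ', mul_pow] at hspan
    exact mul_left_cancel₀ (pow_ne_zero 2 (nonZeroDivisors.ne_zero J.2)) hspan

theorem of_dvd_prime {e r : ℕ} (hr : r.Prime) (hx : IsSqrtClass (r : R) x) (he : e ∣ r) :
    IsSqrtClass (e : R) 1 ∨ IsSqrtClass (e : R) x := by
  rcases (Nat.dvd_prime hr).mp he with rfl | rfl
  · exact .inl (Nat.cast_one (R := R) ▸ .one)
  · exact .inr hx

end IsSqrtClass

end SquareRootsOfPrincipalIdeals

section QuadraticOrder

variable {D : ℤ}

/-- The `ℤ`-basis `1, √D` of `ℤ√D`. -/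
noncomputable def zsqrtdBasis (D : ℤ) : Module.Basis (Fin 2) ℤ (ℤ√D) :=
  .ofEquivFun
    { toFun z := ![z.re, z.im]
      invFun c := ⟨c 0, c 1⟩
      map_add' z w := by simp
      map_smul' n z := by simp
      left_inv z := rfl
      right_inv c := by ext i; fin_cases i <;> rfl }

instance zsqrtd_moduleFree : Module.Free ℤ (ℤ√D) := .of_basis (zsqrtdBasis D)

instance zsqrtd_moduleFinite : Module.Finite ℤ (ℤ√D) := .of_basis (zsqrtdBasis D)

theorem zsqrtdBasis_repr (z : ℤ√D) : ⇑((zsqrtdBasis D).repr z) = ![z.re, z.im] := rfl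

theorem zsqrtdBasis_zero : zsqrtdBasis D 0 = 1 := by
  rw [Module.Basis.apply_eq_iff]
  ext i
  fin_cases i <;> simp [zsqrtdBasis_repr]

theorem zsqrtdBasis_one : zsqrtdBasis D 1 = Zsqrtd.sqrtd := by
  rw [Module.Basis.apply_eq_iff]
  ext i
  fin_cases i <;> simp [zsqrtdBasis_repr]

theorem algebraNorm_zsqrtd (z : ℤ√D) : Algebra.norm ℤ z = z.norm := by
  rw [Algebra.norm_eq_matrix_det (zsqrtdBasis D), Matrix.det_fin_two, Zsqrtd.norm_def]
  simp [Algebra.leftMulMatrix_eq_repr_mul, zsqrtdBasis_repr, zsqrtdBasis_zero, zsqrtdBasis_one]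

theorem intCast_dvd_of_dvd_sq {r : ℤ} (hr : Prime r) (hrD : ¬ r ∣ 2 * D) {z : ℤ√D}
    (hz : (r : ℤ√D) ∣ z ^ 2) : (r : ℤ√D) ∣ z := by
  rw [Zsqrtd.intCast_dvd, sq, Zsqrtd.re_mul, Zsqrtd.im_mul] at hz
  obtain ⟨hre, him⟩ := hz
  rw [Zsqrtd.intCast_dvd]
  rw [mul_comm z.im, ← two_mul] at him
  have hmul : r ∣ z.re * z.im :=
    (hr.dvd_mul.mp him).resolve_left fun h => hrD (h.mul_right D)
  rcases hr.dvd_mul.mp hmul with h | h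
  · have hD : r ∣ D * (z.im * z.im) := by
      rw [← mul_assoc]
      exact (dvd_add_right (h.mul_right _)).mp hre
    exact ⟨h, or_self_iff.mp (hr.dvd_mul.mp
      ((hr.dvd_mul.mp hD).resolve_left fun h => hrD (h.mul_left 2)))⟩
  · exact ⟨or_self_iff.mp (hr.dvd_mul.mp ((dvd_add_left (h.mul_left _)).mp hre)), h⟩

theorem add_star_zsqrtd (z : ℤ√D) : z + star z = (2 * z.re : ℤ) := by
  ext <;> simp [two_mul]

theorem zsqrtd_sqrtd_sq : (Zsqrtd.sqrtd : ℤ√D) ^ 2 = D := by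
  rw [sq, Zsqrtd.dmuld]

variable [IsDedekindDomain (ℤ√D)] {x : ClassGroup (ℤ√D)}

theorem absNorm_span_singleton_zsqrtd (hD : D ≤ 0) (z : ℤ√D) :
    (Ideal.absNorm (Ideal.span {z}) : ℤ) = z.norm := by
  rw [Ideal.absNorm_span_singleton, algebraNorm_zsqrtd,
    Int.natAbs_of_nonneg (Zsqrtd.norm_nonneg hD z)]

-- This is Hilbert 90 in explicit form: if `N z = m²` then `z / m` has norm `1`, and
-- `(z + m)² = z (2 (Re z + m))` exhibits `z` as an integer up to squares.
theorem exists_isSqrtClass_intCast (hD : D ≤ 0) (hx : x ^ 2 = 1) :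
    ∃ c : ℤ, IsSqrtClass (c : ℤ√D) x := by
  obtain ⟨z, hz⟩ := exists_isSqrtClass_of_sq_eq_one hx
  obtain ⟨m, hm⟩ : ∃ m : ℤ, z.norm = m ^ 2 := by
    obtain ⟨J, -, hJ⟩ := hz
    exact ⟨Ideal.absNorm (J : Ideal (ℤ√D)), by
      rw [← absNorm_span_singleton_zsqrtd hD, ← hJ, map_pow, Nat.cast_pow]⟩
  by_cases hs : z + m = 0
  · refine ⟨-m, ?_⟩
    rwa [Int.cast_neg, ← eq_neg_of_add_eq_zero_left hs]
  · have hsq : z * (2 * (z.re + m) : ℤ) = (z + m) ^ 2 := by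
      have hnorm : (m : ℤ√D) ^ 2 = z * star z := by
        rw [← Zsqrtd.norm_eq_mul_conj, hm, Int.cast_pow]
      rw [mul_add, Int.cast_add, ← add_star_zsqrtd]
      push_cast
      linear_combination -hnorm
    exact ⟨_, hz.of_associated_mul_sq hs (.of_eq hsq)⟩

theorem exists_squarefree_isSqrtClass (hD : D ≤ 0) (hx : x ^ 2 = 1) :
    ∃ e : ℕ, Squarefree e ∧ IsSqrtClass (e : ℤ√D) x := by
  obtain ⟨c, hc⟩ := exists_isSqrtClass_intCast hD hx
  have hc0 : 0 < c.natAbs := Int.natAbs_pos.mpr (by exact_mod_cast hc.ne_zero)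
  obtain ⟨e, f, he, hf, hef, hsf⟩ := Nat.sq_mul_squarefree_of_pos hc0
  have hs : ((f * e : ℕ) : ℤ√D) ≠ 0 := Nat.cast_ne_zero.mpr (by positivity)
  refine ⟨e, hsf, hc.of_associated_mul_sq hs ?_⟩
  have hass : Associated (c : ℤ) (f ^ 2 * e : ℕ) := hef ▸ Int.associated_natAbs c
  have hsq : ((f * e : ℕ) : ℤ√D) ^ 2 = ((f ^ 2 * e : ℕ) : ℤ) * (e : ℤ√D) := by
    push_cast
    ring
  rw [hsq]
  exact (hass.map (Int.castRingHom (ℤ√D))).mul_right (e : ℤ√D)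

theorem IsSqrtClass.dvd_two_mul_of_squarefree {e : ℕ} (he : Squarefree e)
    (hx : IsSqrtClass (e : ℤ√D) x) : (e : ℤ) ∣ 2 * D := by
  obtain ⟨J, -, hJ⟩ := hx
  rw [Int.natCast_dvd, ← Nat.prod_primeFactors_of_squarefree he]
  refine Finset.prod_primes_dvd _ (fun r hr => (Nat.prime_of_mem_primeFactors hr).prime) ?_
  intro r hr
  have hrp := Nat.prime_of_mem_primeFactors hr
  rw [← Int.natCast_dvd]
  by_contra hrD
  have hre : ((r : ℤ) : ℤ√D) ∣ e := by
    exact_mod_cast Nat.cast_dvd_cast (Nat.dvd_of_mem_primeFactors hr)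
  have hle : (J : Ideal (ℤ√D)) ≤ Ideal.span {((r : ℤ) : ℤ√D)} := fun z hz =>
    Ideal.mem_span_singleton.mpr <|
      intCast_dvd_of_dvd_sq (Nat.prime_iff_prime_int.mp hrp) hrD <|
        hre.trans (Ideal.mem_span_singleton.mp (hJ ▸ Ideal.pow_mem_pow hz 2))
  have hdvd : ((r * r : ℤ) : ℤ√D) ∣ (e : ℤ) := by
    have := Ideal.pow_right_mono hle 2
    rw [hJ, Ideal.span_singleton_pow, Ideal.span_singleton_le_span_singleton] at this
    exact_mod_cast sq ((r : ℤ) : ℤ√D) ▸ this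
  have hrr : r * r ∣ e := by exact_mod_cast (Zsqrtd.intCast_dvd_intCast _ _).mp hdvd
  exact hrp.not_isUnit (he r hrr)

theorem exists_eq_span_intCast_of_isPrincipal {J : Ideal (ℤ√D)} (hJ : J.IsPrincipal)
    (hlt : (Ideal.absNorm J : ℤ) < -D) : ∃ u : ℤ, J = Ideal.span {(u : ℤ√D)} := by
  obtain ⟨z, rfl⟩ := hJ
  refine ⟨z.re, ?_⟩
  change (Ideal.absNorm (Ideal.span {z}) : ℤ) < -D at hlt
  have hD : D < 0 := by lia
  rw [absNorm_span_singleton_zsqrtd hD.le, Zsqrtd.norm_def] at hlt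
  have him : z.im = 0 := by
    by_contra h
    have : 0 < z.im * z.im := mul_self_pos.mpr h
    nlinarith [mul_self_nonneg z.re]
  congr 2
  exact Zsqrtd.ext (by simp) (by simp [him])

theorem IsSqrtClass.ne_one_of_squarefree {e : ℕ} (hx : IsSqrtClass (e : ℤ√D) x)
    (he : Squarefree e) (h1 : 1 < e) (hlt : (e : ℤ) < -D) : x ≠ 1 := by
  obtain ⟨J, rfl, hJ⟩ := hx
  intro hJ1
  have hnorm : Ideal.absNorm (J : Ideal (ℤ√D)) = e := by
    have := absNorm_span_singleton_zsqrtd (by lia) (e : ℤ√D)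
    rw [← hJ, map_pow, Zsqrtd.norm_natCast, ← sq] at this
    exact Nat.pow_left_injective two_ne_zero (by exact_mod_cast this)
  obtain ⟨u, hu⟩ := exists_eq_span_intCast_of_isPrincipal
    ((ClassGroup.mk0_eq_one_iff J.2).mp hJ1) (by rwa [hnorm])
  have hdvd : ((u * u : ℤ) : ℤ√D) ∣ (e : ℤ) := by
    rw [hu, Ideal.span_singleton_pow, Ideal.span_singleton_eq_span_singleton] at hJ
    exact_mod_cast sq (u : ℤ√D) ▸ hJ.dvd
  have hunit : IsUnit u :=
    (Int.squarefree_natCast.mpr he) u ((Zsqrtd.intCast_dvd_intCast _ _).mp hdvd)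
  have htop : (J : Ideal (ℤ√D)) = ⊤ := by
    rw [hu, Ideal.span_singleton_eq_top]
    exact hunit.map (Int.castRingHom (ℤ√D))
  rw [htop, Ideal.absNorm_top] at hnorm
  lia

theorem exists_isSqrtClass_two (hD : D % 4 = 3) : ∃ x, IsSqrtClass ((2 : ℕ) : ℤ√D) x := by
  obtain ⟨k, rfl⟩ : ∃ k, D = 4 * k - 1 := ⟨(D + 1) / 4, by lia⟩
  refine exists_isSqrtClass_of_sq_eq_span (Nat.cast_ne_zero.mpr two_ne_zero)
    (sq_span_pair_eq_span_singleton (t := 1 + Zsqrtd.sqrtd) (b := Zsqrtd.sqrtd + (2 * k : ℤ))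
      (x := k) (y := 1) (z := -1) ?_ ?_)
  · rw [add_sq, zsqrtd_sqrtd_sq]
    push_cast
    ring
  · push_cast
    ring

theorem exists_isSqrtClass_of_isCoprime {m n : ℤ} (hm : m ≠ 0) (hmn : IsCoprime m n)
    (hD : D = -(m * n)) : ∃ x, IsSqrtClass (m : ℤ√D) x := by
  obtain ⟨u, v, huv⟩ := hmn
  refine exists_isSqrtClass_of_sq_eq_span (Int.cast_ne_zero.mpr hm)
    (sq_span_pair_eq_span_singleton (t := Zsqrtd.sqrtd) (b := -(n : ℤ√D))
      (x := u) (y := 0) (z := -v) ?_ ?_)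
  · rw [zsqrtd_sqrtd_sq, mul_neg]
    exact_mod_cast hD
  · rw [zero_mul, add_zero, neg_mul_neg]
    exact_mod_cast congrArg (Int.cast (R := ℤ√D)) huv

theorem IsSqrtClass.cofactor {m n : ℤ} (hx : IsSqrtClass (m : ℤ√D) x)
    (hD : D = -(m * n)) : IsSqrtClass (n : ℤ√D) x := by
  have hsq : (Zsqrtd.sqrtd : ℤ√D) ^ 2 = -(m * n) := by
    rw [zsqrtd_sqrtd_sq]
    exact_mod_cast congrArg (Int.cast (R := ℤ√D)) hD
  have hs : (Zsqrtd.sqrtd : ℤ√D) ≠ 0 := fun h => one_ne_zero (congrArg Zsqrtd.im h)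
  refine hx.of_associated_mul_sq hs ?_
  rw [hsq]
  exact (Associated.refl _).neg_right

variable {p q : ℕ} {a b : ClassGroup (ℤ√D)}

theorem eq_of_isSqrtClass_of_sq_eq_one (hp : p.Prime) (hq : q.Prime) (hD : D = -(p * q))
    (ha : IsSqrtClass ((2 : ℕ) : ℤ√D) a) (hb : IsSqrtClass (p : ℤ√D) b) (hx : x ^ 2 = 1) :
    x = 1 ∨ x = a ∨ x = b ∨ x = a * b := by
  have hpos : 0 < (p * q : ℤ) := by exact_mod_cast mul_pos hp.pos hq.pos
  obtain ⟨e, he, hex⟩ := exists_squarefree_isSqrtClass (by lia) hx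
  have hdvd : e ∣ 2 * (p * q) := by
    have := hex.dvd_two_mul_of_squarefree he
    rw [hD, mul_neg, dvd_neg] at this
    exact_mod_cast this
  obtain ⟨e₂, e', h₂, he', rfl⟩ := Nat.dvd_mul.mp hdvd
  obtain ⟨eₚ, e_q, hₚ, h_q, rfl⟩ := Nat.dvd_mul.mp he'
  have hbq : IsSqrtClass (q : ℤ√D) b :=
    mod_cast IsSqrtClass.cofactor (m := p) (n := q) (mod_cast hb) hD
  have hbb : b * b = 1 := by rw [← sq, hb.sq_eq_one]
  have hmul {u v t} (hu : IsSqrtClass (e₂ : ℤ√D) u) (hv : IsSqrtClass (eₚ : ℤ√D) v)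
      (ht : IsSqrtClass (e_q : ℤ√D) t) : x = u * (v * t) := by
    rw [Nat.cast_mul, Nat.cast_mul] at hex
    exact hex.unique (hu.mul (hv.mul ht))
  rcases ha.of_dvd_prime Nat.prime_two h₂ with hu | hu <;>
    rcases hb.of_dvd_prime hp hₚ with hv | hv <;>
    rcases hbq.of_dvd_prime hq h_q with ht | ht <;>
    simp [hmul hu hv ht, hbb]

theorem card_two_torsion_zsqrtd (hp : p.Prime) (hq : q.Prime) (hne : p ≠ q) (hp2 : p ≠ 2)
    (hq2 : q ≠ 2) (hD : D = -(p * q)) (hD4 : D % 4 = 3) :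
    Nat.card {x : ClassGroup (ℤ√D) // x ^ 2 = 1} = 2 ^ 2 := by
  have hp3 : (2 : ℤ) < p := by have := hp.two_le; lia
  have hq3 : (2 : ℤ) < q := by have := hq.two_le; lia
  obtain ⟨a, ha⟩ := exists_isSqrtClass_two hD4
  obtain ⟨b, hb⟩ := exists_isSqrtClass_of_isCoprime (m := p) (n := q) (mod_cast hp.ne_zero)
    (Nat.isCoprime_iff_coprime.mpr ((Nat.coprime_primes hp hq).mpr hne)) hD
  have hb : IsSqrtClass (p : ℤ√D) b := mod_cast hb
  have hab : IsSqrtClass ((2 * p : ℕ) : ℤ√D) (a * b) := by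
    rw [Nat.cast_mul]
    exact ha.mul hb
  have h2p : Squarefree (2 * p) := (Nat.squarefree_mul
    ((Nat.coprime_primes Nat.prime_two hp).mpr hp2.symm)).mpr
      ⟨Nat.prime_two.prime.squarefree, hp.prime.squarefree⟩
  have ha1 : a ≠ 1 := ha.ne_one_of_squarefree Nat.prime_two.prime.squarefree one_lt_two
    (by push_cast; nlinarith)
  have hb1 : b ≠ 1 := hb.ne_one_of_squarefree hp.prime.squarefree hp.one_lt (by nlinarith)
  have hab1 : a * b ≠ 1 := hab.ne_one_of_squarefree h2p (by lia) (by push_cast; nlinarith)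
  exact card_two_torsion_eq_four ha.sq_eq_one hb.sq_eq_one ha1 hb1 hab1
    fun x hx => eq_of_isSqrtClass_of_sq_eq_one hp hq hD ha hb hx

theorem exists_pow_eq_span_of_norm_eq_pow {β : ℤ√D} {w : ℤ} {n : ℕ} (hβ : β.norm = w ^ n)
    (hcop : IsCoprime β.norm (2 * β.re)) : ∃ A : Ideal (ℤ√D), A ^ n = Ideal.span {β} := by
  have hmul : Ideal.span {β} * Ideal.span {star β} = Ideal.span {(w : ℤ√D)} ^ n := by
    rw [Ideal.span_singleton_mul_span_singleton, ← Zsqrtd.norm_eq_mul_conj, hβ,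
      Ideal.span_singleton_pow, Int.cast_pow]
  have hspan : IsCoprime (Ideal.span {β}) (Ideal.span {star β}) := by
    obtain ⟨u, v, huv⟩ := hcop
    rw [Ideal.isCoprime_span_singleton_iff]
    refine ⟨u * star β + v, v, ?_⟩
    calc (u * star β + v) * β + v * star β
        = u * (β * star β) + v * (β + star β) := by ring
      _ = 1 := by
        rw [← Zsqrtd.norm_eq_mul_conj, add_star_zsqrtd]
        exact_mod_cast congrArg (Int.cast (R := ℤ√D)) huv
  obtain ⟨A, hA⟩ := exists_eq_pow_of_mul_eq_pow_of_coprime hspan hmul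
  exact ⟨A, hA.symm⟩

-- A principal ideal of norm less than `-D` is generated by a rational integer, so it cannot be an
-- `r`-th root of the primitive ideal `(β)`.
theorem not_isPrincipal_of_pow_eq_span {B : Ideal (ℤ√D)} {β : ℤ√D} {r : ℕ} (hr : r ≠ 0)
    (hB : B ^ r = Ideal.span {β}) (hprim : IsCoprime β.re β.im) (hβ1 : β.norm ≠ 1) (hD : D ≤ 0)
    (hlt : β.norm < (-D) ^ r) : ¬ B.IsPrincipal := by
  intro hprin
  have hnorm : (Ideal.absNorm B : ℤ) ^ r = β.norm := by
    rw [← absNorm_span_singleton_zsqrtd hD, ← hB, map_pow, Nat.cast_pow]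
  obtain ⟨u, rfl⟩ := exists_eq_span_intCast_of_isPrincipal hprin
    (lt_of_pow_lt_pow_left₀ r (by lia) (hnorm ▸ hlt))
  have hdvd : (u : ℤ√D) ∣ β := by
    rw [Ideal.span_singleton_pow, Ideal.span_singleton_eq_span_singleton] at hB
    exact (dvd_pow_self _ hr).trans hB.dvd
  obtain ⟨hre, him⟩ := (Zsqrtd.intCast_dvd u β).mp hdvd
  have hunit : IsUnit (u : ℤ√D) := (hprim.isUnit_of_dvd' hre him).map (Int.castRingHom (ℤ√D))
  rw [Ideal.span_singleton_eq_top.mpr hunit] at hnorm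
  exact hβ1 (by simpa using hnorm.symm)

theorem orderOf_mk0_eq_prime_pow {A : (Ideal (ℤ√D))⁰} {β : ℤ√D} {r k : ℕ} [Fact r.Prime]
    (hA : (A : Ideal (ℤ√D)) ^ r ^ (k + 1) = Ideal.span {β}) (hprim : IsCoprime β.re β.im)
    (hβ1 : β.norm ≠ 1) (hD : D ≤ 0) (hlt : β.norm < (-D) ^ r) :
    orderOf (ClassGroup.mk0 A) = r ^ (k + 1) := by
  refine orderOf_eq_prime_pow ?_ ((mk0_pow_eq_one_iff_isPrincipal A _).mpr ⟨β, hA⟩)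
  rw [mk0_pow_eq_one_iff_isPrincipal]
  rw [pow_succ, pow_mul] at hA
  exact not_isPrincipal_of_pow_eq_span (Fact.out : r.Prime).ne_zero hA hprim hβ1 hD hlt

theorem exists_orderOf_eq_two_pow_of_add_eq {m n w : ℤ} {k : ℕ} (hm : 1 < m) (hn : 0 < n)
    (hmn : IsCoprime m n) (hw : Odd w) (hsum : m + n = 2 * w ^ 2 ^ k) (hD : D = -(m * n)) :
    ∃ g : ClassGroup (ℤ√D), orderOf g = 2 ^ (k + 1) := by
  let β : ℤ√D := ⟨w ^ 2 ^ k - n, 1⟩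
  have hnorm : β.norm = (w ^ 2 ^ k) ^ 2 := by
    rw [Zsqrtd.norm_def]
    linear_combination n * hsum - hD
  have hcop : IsCoprime β.norm (2 * β.re) := by
    rw [hnorm]
    refine IsCoprime.pow_left (IsCoprime.mul_right ?_ ?_)
    · exact Int.isCoprime_two_right.mpr hw.pow
    · obtain ⟨u, v, huv⟩ := hmn
      exact ⟨u + v, u - v, by linear_combination huv - u * hsum⟩
  obtain ⟨A, hA⟩ := exists_pow_eq_span_of_norm_eq_pow (w := w) (n := 2 ^ (k + 1))
    (by rw [hnorm, ← pow_mul, pow_succ]) hcop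
  have hA0 : A ≠ 0 := by
    rintro rfl
    rw [zero_pow (by positivity), eq_comm, Ideal.zero_eq_bot, Ideal.span_singleton_eq_bot] at hA
    exact one_ne_zero (congrArg Zsqrtd.im hA)
  have hlt : w ^ 2 ^ k < m * n := by nlinarith
  refine ⟨ClassGroup.mk0 ⟨A, mem_nonZeroDivisors_iff_ne_zero.mpr hA0⟩,
    orderOf_mk0_eq_prime_pow hA isCoprime_one_right ?_ ?_ ?_⟩
  · rw [hnorm]
    nlinarith
  · nlinarith
  · rw [hnorm, hD, neg_neg]
    exact pow_lt_pow_left₀ hlt (by lia) two_ne_zero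

end QuadraticOrder

section QuadraticField

variable {D : ℤ}

theorem exists_intCast_eq_of_squarefree_mul_sq (hD : Squarefree D) {c : ℚ} {k : ℤ}
    (h : D * c ^ 2 = k) : ∃ t : ℤ, c = t := by
  have hnum : D * c.num ^ 2 = k * (c.den : ℤ) ^ 2 := by
    have hden : (c.den : ℚ) ≠ 0 := by exact_mod_cast c.den_nz
    rw [← Rat.num_div_den c, div_pow, mul_div_assoc', div_eq_iff (pow_ne_zero 2 hden)] at h
    exact_mod_cast h
  have hcop : IsCoprime ((c.den : ℤ) ^ 2) (c.num ^ 2) :=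
    (Rat.isCoprime_num_den c).symm.pow
  have hdvd : (c.den : ℤ) * c.den ∣ D :=
    sq (c.den : ℤ) ▸ hcop.dvd_of_dvd_mul_right (hnum ▸ Dvd.intro_left _ rfl)
  have hden : c.den = 1 := by
    simpa using Int.isUnit_iff_natAbs_eq.mp (hD _ hdvd)
  exact ⟨c.num, ((Rat.den_eq_one_iff c).mp hden).symm⟩

theorem even_and_even_of_sq_sub_mul_sq {m t n : ℤ} (hD0 : D % 4 ≠ 0) (hD1 : D % 4 ≠ 1)
    (h : m ^ 2 - D * t ^ 2 = 4 * n) : Even m ∧ Even t := by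
  rcases m.even_or_odd' with ⟨k, rfl | rfl⟩ <;> rcases t.even_or_odd' with ⟨l, rfl | rfl⟩
  · exact ⟨even_two_mul k, even_two_mul l⟩
  · exact absurd (show D = 4 * (k ^ 2 - D * (l ^ 2 + l) - n) by linear_combination -h) (by lia)
  · exact absurd (show 1 = 4 * (n + D * l ^ 2 - k ^ 2 - k) by linear_combination h) (by lia)
  · exact absurd (show D = 4 * (k ^ 2 + k - D * (l ^ 2 + l) - n) + 1 by linear_combination -h)
      (by lia)

theorem emod_four_ne_zero_of_squarefree (hD : Squarefree D) : D % 4 ≠ 0 := fun h =>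
  absurd (hD 2 (Int.dvd_of_emod_eq_zero h)) (by decide)

theorem isIntegral_trace_and_norm {z : QuadraticAlgebra ℚ D 0} (hz : IsIntegral ℤ z) :
    IsIntegral ℤ (QuadraticAlgebra.trace z) ∧ IsIntegral ℤ (QuadraticAlgebra.norm z) := by
  have hstar : IsIntegral ℤ (star z) :=
    hz.map ((starRingEnd (QuadraticAlgebra ℚ D 0)).toIntAlgHom)
  have hinj := QuadraticAlgebra.algebraMap_injective (R := ℚ) (a := D) (b := 0)
  rw [← isIntegral_algebraMap_iff hinj, ← isIntegral_algebraMap_iff hinj,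
    QuadraticAlgebra.algebraMap_trace_eq_add_star, QuadraticAlgebra.algebraMap_norm_eq_mul_star]
  exact ⟨hz.add hstar, hz.mul hstar⟩

theorem exists_zsqrtd_of_isIntegral (hsf : Squarefree D) (hD1 : D % 4 ≠ 1)
    {z : QuadraticAlgebra ℚ D 0} (hz : IsIntegral ℤ z) :
    ∃ y : ℤ√D, z = ⟨y.re, y.im⟩ := by
  obtain ⟨htrace, hnorm⟩ := isIntegral_trace_and_norm hz
  obtain ⟨m, hm⟩ := IsIntegrallyClosed.isIntegral_iff.mp htrace
  obtain ⟨n, hn⟩ := IsIntegrallyClosed.isIntegral_iff.mp hnorm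
  replace hm : (m : ℚ) = 2 * z.re := by simpa [QuadraticAlgebra.trace_def] using hm
  replace hn : (n : ℚ) = z.re * z.re - D * z.im * z.im := by
    simpa [QuadraticAlgebra.norm_def] using hn
  obtain ⟨t, ht⟩ := exists_intCast_eq_of_squarefree_mul_sq hsf (c := 2 * z.im) (k := m ^ 2 - 4 * n)
    (by push_cast; rw [hm, hn]; ring)
  have heq : m ^ 2 - D * t ^ 2 = 4 * n := by
    have : (m : ℚ) ^ 2 - D * t ^ 2 = 4 * n := by rw [hm, hn, ← ht]; ring
    exact_mod_cast this
  obtain ⟨⟨u, rfl⟩, ⟨v, rfl⟩⟩ :=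
    even_and_even_of_sq_sub_mul_sq (emod_four_ne_zero_of_squarefree hsf) hD1 heq
  push_cast at hm ht
  exact ⟨⟨u, v⟩, QuadraticAlgebra.ext (by simp only; linarith) (by simp only; linarith)⟩

theorem ne_mul_self_of_squarefree (hsf : Squarefree D) (hD1 : D % 4 ≠ 1) (n : ℤ) :
    D ≠ n * n := by
  rintro rfl
  have hn := Int.isUnit_iff_natAbs_eq.mp (hsf n dvd_rfl)
  rw [← Int.natAbs_mul_self, hn] at hD1
  exact hD1 rfl

theorem algebraMap_zsqrtd {A : Type*} [CommRing A] [Algebra (ℤ√D) A] (y : ℤ√D) :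
    algebraMap (ℤ√D) A y = y.re + y.im * algebraMap (ℤ√D) A Zsqrtd.sqrtd := by
  calc algebraMap (ℤ√D) A y
      = algebraMap (ℤ√D) A ((y.re : ℤ√D) + Zsqrtd.sqrtd * (y.im : ℤ√D)) :=
        congrArg _ Zsqrtd.decompose
    _ = y.re + y.im * algebraMap (ℤ√D) A Zsqrtd.sqrtd := by
      rw [map_add, map_mul, map_intCast, map_intCast, mul_comm]

variable {K : Type*} [Field K] [NumberField K] {α : K}

theorem exists_quadraticAlgebra_algEquiv (hD : ∀ n : ℤ, D ≠ n * n) (hα : α ^ 2 = D)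
    (htop : IntermediateField.adjoin ℚ {α} = ⊤) :
    ∃ f : QuadraticAlgebra ℚ D 0 ≃ₐ[ℚ] K, ∀ u v : ℚ, f ⟨u, v⟩ = u + v * α := by
  have : Fact (∀ r : ℚ, r ^ 2 ≠ D + 0 * r) := ⟨fun r hr => by
    have hsq : IsSquare (D : ℚ) := ⟨r, by rw [← sq, hr, zero_mul, add_zero]⟩
    obtain ⟨n, hn⟩ := Rat.isSquare_intCast_iff.mp hsq
    exact hD n hn⟩
  let f : QuadraticAlgebra ℚ D 0 →ₐ[ℚ] K :=
    QuadraticAlgebra.lift ⟨α, by rw [← sq, hα]; simp [Algebra.smul_def]⟩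
  have hf (u v : ℚ) : f ⟨u, v⟩ = u + v * α := by
    change u • (1 : K) + v • α = u + v * α
    simp [Algebra.smul_def]
  have hsurj : f.range = ⊤ := by
    rw [eq_top_iff, ← (IntermediateField.adjoin_simple_eq_top_iff_of_isAlgebraic
      (Algebra.IsAlgebraic.isAlgebraic α)).mp htop]
    exact Algebra.adjoin_singleton_le ⟨⟨0, 1⟩, by simp [hf]⟩
  exact ⟨.ofBijective f ⟨f.toRingHom.injective, (AlgHom.range_eq_top f).mp hsurj⟩, hf⟩

theorem isIntegralClosure_zsqrtd [Algebra (ℤ√D) K] (hsf : Squarefree D) (hD1 : D % 4 ≠ 1)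
    (htop : IntermediateField.adjoin ℚ {algebraMap (ℤ√D) K Zsqrtd.sqrtd} = ⊤) :
    IsIntegralClosure (ℤ√D) ℤ K := by
  have hD := ne_mul_self_of_squarefree hsf hD1
  have hsq : algebraMap (ℤ√D) K Zsqrtd.sqrtd ^ 2 = D := by
    rw [← map_pow, zsqrtd_sqrtd_sq, map_intCast]
  obtain ⟨f, hf⟩ := exists_quadraticAlgebra_algEquiv hD hsq htop
  refine ⟨?_, fun {x} => ⟨fun hx => ?_, ?_⟩⟩
  · rw [← Zsqrtd.lift.apply_symm_apply (algebraMap (ℤ√D) K)]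
    exact Zsqrtd.lift_injective _ hD
  · obtain ⟨y, hy⟩ := exists_zsqrtd_of_isIntegral hsf hD1
      (hx.map f.symm.toAlgHom.toRingHom.toIntAlgHom)
    refine ⟨y, ?_⟩
    calc algebraMap (ℤ√D) K y
        = f ⟨y.re, y.im⟩ := by rw [algebraMap_zsqrtd, hf, Rat.cast_intCast, Rat.cast_intCast]
      _ = f (f.symm x) := congrArg f hy.symm
      _ = x := f.apply_symm_apply x
  · rintro ⟨y, rfl⟩
    exact (Algebra.IsIntegral.isIntegral (R := ℤ) y).map (algebraMap (ℤ√D) K).toIntAlgHom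

theorem adjoin_adjoinSimple_gen_eq_top {F E : Type*} [Field F] [Field E] [Algebra F E] (z : E) :
    IntermediateField.adjoin F {IntermediateField.AdjoinSimple.gen F z} = ⊤ :=
  IntermediateField.lift_injective _ (by simp)

theorem exists_numberField_sq_eq (D : ℤ) :
    ∃ (K : Type) (_ : Field K) (_ : NumberField K) (α : K),
      α ^ 2 = D ∧ IntermediateField.adjoin ℚ {α} = ⊤ := by
  obtain ⟨z, hz⟩ := IsAlgClosed.exists_pow_nat_eq (D : ℂ) two_pos
  have hint : IsIntegral ℚ z := .of_pow two_pos (hz ▸ isIntegral_algebraMap (x := (D : ℚ)))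
  have : FiniteDimensional ℚ (IntermediateField.adjoin ℚ {z}) :=
    IntermediateField.adjoin.finiteDimensional hint
  exact ⟨IntermediateField.adjoin ℚ {z}, inferInstance, ⟨⟩,
    IntermediateField.AdjoinSimple.gen ℚ z, by ext; simp [hz],
    adjoin_adjoinSimple_gen_eq_top z⟩

theorem exists_algebra_isIntegralClosure_zsqrtd (hsf : Squarefree D) (hD1 : D % 4 ≠ 1)
    (hα : α ^ 2 = D) (htop : IntermediateField.adjoin ℚ {α} = ⊤) :
    ∃ _ : Algebra (ℤ√D) K, IsIntegralClosure (ℤ√D) ℤ K := by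
  let φ : ℤ√D →+* K := Zsqrtd.lift ⟨α, by rw [← sq, hα]⟩
  have hφ : φ Zsqrtd.sqrtd = α := by simp [φ]
  let _ : Algebra (ℤ√D) K := φ.toAlgebra
  exact ⟨inferInstance, isIntegralClosure_zsqrtd hsf hD1 (by rwa [← hφ] at htop)⟩

theorem isDedekindDomain_zsqrtd (hsf : Squarefree D) (hD1 : D % 4 ≠ 1) :
    IsDedekindDomain (ℤ√D) := by
  obtain ⟨K, _, _, α, hα, htop⟩ := exists_numberField_sq_eq D
  obtain ⟨_, _⟩ := exists_algebra_isIntegralClosure_zsqrtd hsf hD1 hα htop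
  have : IsDomain (ℤ√D) := (IsIntegralClosure.algebraMap_injective (ℤ√D) ℤ K).isDomain
  exact IsIntegralClosure.isDedekindDomain ℤ ℚ K (ℤ√D)

variable [IsDedekindDomain (ℤ√D)]

theorem nonempty_classGroup_mulEquiv_zsqrtd (hsf : Squarefree D) (hD1 : D % 4 ≠ 1)
    (hα : α ^ 2 = D) (htop : IntermediateField.adjoin ℚ {α} = ⊤) :
    Nonempty (ClassGroup (𝓞 K) ≃* ClassGroup (ℤ√D)) := by
  obtain ⟨_, _⟩ := exists_algebra_isIntegralClosure_zsqrtd hsf hD1 hα htop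
  exact ⟨ClassGroup.mulEquiv (RingOfIntegers.equiv (ℤ√D))⟩

theorem finite_classGroup_zsqrtd (hsf : Squarefree D) (hD1 : D % 4 ≠ 1) :
    Finite (ClassGroup (ℤ√D)) := by
  obtain ⟨K, _, _, α, hα, htop⟩ := exists_numberField_sq_eq D
  obtain ⟨e⟩ := nonempty_classGroup_mulEquiv_zsqrtd hsf hD1 hα htop
  exact .of_equiv _ e.toEquiv

theorem twoClassGroupIso_of_sylow_zsqrtd {d : ℕ} (hD : D = -d) (hsf : Squarefree D)
    (hD1 : D % 4 ≠ 1) (Q : Sylow 2 (ClassGroup (ℤ√D))) {G : Type} [Group G]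
    (f : Q ≃* G) : twoClassGroupIso d G := by
  intro K _ _ α hα htop P
  have := finite_classGroup_zsqrtd hsf hD1
  have hαD : α ^ 2 = D := by rw [hα, hD, Int.cast_neg, Int.cast_natCast]
  obtain ⟨e⟩ := nonempty_classGroup_mulEquiv_zsqrtd hsf hD1 hαD htop
  obtain ⟨h⟩ := nonempty_sylow_mulEquiv_of_mulEquiv e P Q
  exact ⟨h.trans f⟩

end QuadraticField

section TwoOddPrimes

variable {p q : ℕ}

theorem squarefree_neg_mul_primes (hp : p.Prime) (hq : q.Prime) (hne : p ≠ q) :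
    Squarefree (-(p * q : ℤ)) := by
  rw [← Int.squarefree_natAbs, Int.natAbs_neg, ← Nat.cast_mul, Int.natAbs_natCast]
  exact (Nat.squarefree_mul ((Nat.coprime_primes hp hq).mpr hne)).mpr
    ⟨hp.prime.squarefree, hq.prime.squarefree⟩

theorem ne_two_of_even_add_prime (hq : q.Prime) (hne : p ≠ q) (h : Even (p + q)) :
    p ≠ 2 := by
  rintro rfl
  exact hne ((hq.even_iff.mp ((Nat.even_add.mp h).mp even_two)).symm)

theorem neg_mul_emod_four_eq_three {m n W : ℤ} (hm : Odd m) (hW : Odd W) (h : m + n = 2 * W) :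
    -(m * n) % 4 = 3 := by
  obtain ⟨t, rfl⟩ := hm
  obtain ⟨s, rfl⟩ := hW
  obtain rfl : n = 4 * s + 1 - 2 * t := by linarith
  have : -((2 * t + 1) * (4 * s + 1 - 2 * t)) = 4 * (t ^ 2 - 2 * t * s - s - 1) + 3 := by ring
  lia

end TwoOddPrimes

theorem sylow_two_class_group_of_type_general (ℓ : ℕ) (hℓ : 1 ≤ ℓ) (w : ℤ) (hw : Odd w)
    (p₁ p₂ : ℕ) (hp₁ : p₁.Prime) (hp₂ : p₂.Prime) (hne : p₁ ≠ p₂)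
    (hsum : (p₁ : ℤ) + p₂ = 2 * w ^ 2 ^ (ℓ - 1)) :
    ∃ a b : ℕ, 1 ≤ a ∧ ℓ ≤ b ∧
      twoClassGroupIso (p₁ * p₂) (Multiplicative (ZMod (2 ^ a) × ZMod (2 ^ b))) := by
  obtain ⟨D, hD⟩ : ∃ D : ℤ, D = -(p₁ * p₂) := ⟨_, rfl⟩
  have heven : Even (p₁ + p₂) := mod_cast (hsum ▸ even_two_mul _ : Even ((p₁ : ℤ) + p₂))
  have hp₁2 : p₁ ≠ 2 := ne_two_of_even_add_prime hp₂ hne heven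
  have hp₂2 : p₂ ≠ 2 := ne_two_of_even_add_prime hp₁ hne.symm (add_comm p₁ p₂ ▸ heven)
  have hsf : Squarefree D := hD ▸ squarefree_neg_mul_primes hp₁ hp₂ hne
  have hD4 : D % 4 = 3 :=
    hD ▸ neg_mul_emod_four_eq_three (mod_cast hp₁.odd_of_ne_two hp₁2) hw.pow hsum
  have hD1 : D % 4 ≠ 1 := by lia
  have := isDedekindDomain_zsqrtd hsf hD1
  have := finite_classGroup_zsqrtd hsf hD1
  have hcop : IsCoprime (p₁ : ℤ) p₂ :=
    Nat.isCoprime_iff_coprime.mpr ((Nat.coprime_primes hp₁ hp₂).mpr hne)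
  obtain ⟨g, hg⟩ := exists_orderOf_eq_two_pow_of_add_eq (mod_cast hp₁.one_lt)
    (mod_cast hp₂.pos) hcop hw hsum hD
  rw [Nat.sub_add_cancel hℓ] at hg
  obtain ⟨Q⟩ : Nonempty (Sylow 2 (ClassGroup (ℤ√D))) := inferInstance
  obtain ⟨a, b, ha, hb, ⟨f⟩⟩ := exists_sylow_mulEquiv_zmod_prod Q
    (card_two_torsion_zsqrtd hp₁ hp₂ hne hp₁2 hp₂2 hD hD4) hg
  exact ⟨a, b, ha, hb, twoClassGroupIso_of_sylow_zsqrtd (mod_cast hD) hsf hD1 Q f⟩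

/-- If `ℓ ≥ 1`, `w` is an odd integer and `2·w^(2^(ℓ-1)) = p₁ + p₂` for distinct primes
`p₁, p₂ ≥ 5`, then the Sylow 2-subgroup of the class group of `ℚ(√(-p₁p₂))` is isomorphic
to `(ℤ/2^aℤ) × (ℤ/2^bℤ)` for some `a ≥ 1` and `b ≥ ℓ`. -/
theorem sylow_two_class_group_of_type (ℓ : ℕ) (hℓ : 1 ≤ ℓ) (w : ℤ) (hw : Odd w)
    (p₁ p₂ : ℕ) (hp₁ : p₁.Prime) (hp₂ : p₂.Prime) (hne : p₁ ≠ p₂)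
    (h5₁ : 5 ≤ p₁) (h5₂ : 5 ≤ p₂)
    (hsum : (p₁ : ℤ) + p₂ = 2 * w ^ 2 ^ (ℓ - 1)) :
    ∃ a b : ℕ, 1 ≤ a ∧ ℓ ≤ b ∧
      twoClassGroupIso (p₁ * p₂) (Multiplicative (ZMod (2 ^ a) × ZMod (2 ^ b))) :=
  sylow_two_class_group_of_type_general ℓ hℓ w hw p₁ p₂ hp₁ hp₂ hne hsum
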